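/- Let k be a commutative ring, let m₁, m₂, n₁, n₂ ∈ k[x₁,x₂,x₃] be homogeneous linear forms, set a₃ := u₁·m₂(u₁²,u₁u₂,u₂²) − u₂·m₁(u₁²,u₁u₂,u₂²) and b₅ := u₁³·n₂(u₁²,u₁u₂,u₂²) − u₂³·n₁(u₁²,u₁u₂,u₂²) in k[u₁,u₂], and let N be the 2×3 matrix with rows (x₁, x₂, x₃n₁ + x₄m₁) and (x₂, x₃, x₁n₂ + x₄m₂) over k[x₁,x₂,x₃,x₄]. Then under the substitution x₁ = u₁²·a₃, x₂ = u₁u₂·a₃, x₃ = u₂²·a₃, x₄ = −b₅, all three 2×2 minors of N become identically zero in k[u₁,u₂]. -/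

import Mathlib

open MvPolynomial

noncomputable section

/-- Evaluation of a polynomial in `x₁,x₂,x₃` at `(u₁², u₁u₂, u₂²)`,
landing in `k[u₁,u₂]`. -/
def sub3 (k : Type*) [CommRing k] :
    MvPolynomial (Fin 3) k →ₐ[k] MvPolynomial (Fin 2) k :=
  aeval ![X 0 ^ 2, X 0 * X 1, X 1 ^ 2]

/-- The inclusion `k[x₁,x₂,x₃] → k[x₁,x₂,x₃,x₄]`. -/
def rho (k : Type*) [CommRing k] :
    MvPolynomial (Fin 3) k →ₐ[k] MvPolynomial (Fin 4) k :=
  aeval ![X 0, X 1, X 2]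

/-!
At the parametrized point the rows of `N` satisfy `u₂ · row₁ = u₁ · row₂`. In the first two columns
this is immediate. In the third, `mᵢ` and `nᵢ` are forms of a common degree `d`, so the substitution
turns each of them into `a₃ᵈ` times its value at `(u₁², u₁u₂, u₂²)`, and the relation becomes
`a₃ᵈ⁺¹ b₅ = b₅ a₃ᵈ⁺¹`. The first two columns are `u₁a₃` and `u₂a₃` times the column
`(u₁, u₂)`, so both minors through the third column are multiples of this relation.
-/

/-- The substitution `x₁ = u₁²a, x₂ = u₁u₂a, x₃ = u₂²a, x₄ = -b` from `k[x₁,x₂,x₃,x₄]` to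
`k[u₁,u₂]`, which for `a = a₃` and `b = b₅` pulls forms back along the parametrization of the
curve. -/
def paramSubst {k : Type*} [CommRing k] (a b : MvPolynomial (Fin 2) k) :
    MvPolynomial (Fin 4) k →ₐ[k] MvPolynomial (Fin 2) k :=
  aeval ![X 0 ^ 2 * a, X 0 * X 1 * a, X 1 ^ 2 * a, -b]

theorem aeval_mul_left_of_isHomogeneous {R A σ : Type*} [CommSemiring R] [CommSemiring A]
    [Algebra R A] {p : MvPolynomial σ R} {d : ℕ} (hp : p.IsHomogeneous d) (a : A) (f : σ → A) :
    aeval (fun i => a * f i) p = a ^ d * aeval f p := by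
  simp only [aeval_def, eval₂_eq, Finset.mul_sum]
  refine Finset.sum_congr rfl fun e he => ?_
  have prod_pow_eq : ∏ i ∈ e.support, a ^ e i = a ^ d := by
    rw [Finset.prod_pow_eq_pow_sum, hp.degree_eq_sum_deg_support he]
  simp only [mul_pow, Finset.prod_mul_distrib, prod_pow_eq]
  exact mul_left_comm _ _ _

theorem aeval_rho {k A : Type*} [CommRing k] [CommSemiring A] [Algebra k A] (x : Fin 4 → A)
    (p : MvPolynomial (Fin 3) k) : aeval x (rho k p) = aeval ![x 0, x 1, x 2] p := by
  rw [rho, comp_aeval_apply]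
  congr 2
  ext i
  fin_cases i <;> simp

section ParamSubst

variable {k : Type*} [CommRing k] (a b : MvPolynomial (Fin 2) k)

theorem paramSubst_X_zero : paramSubst a b (X 0) = X 0 ^ 2 * a := aeval_X _ _

theorem paramSubst_X_one : paramSubst a b (X 1) = X 0 * X 1 * a := aeval_X _ _

theorem paramSubst_X_two : paramSubst a b (X 2) = X 1 ^ 2 * a := aeval_X _ _

theorem paramSubst_X_three : paramSubst a b (X 3) = -b := aeval_X _ _

theorem paramSubst_rho {p : MvPolynomial (Fin 3) k} {d : ℕ} (hp : p.IsHomogeneous d) :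
    paramSubst a b (rho k p) = a ^ d * sub3 k p := by
  rw [paramSubst, aeval_rho, sub3, ← aeval_mul_left_of_isHomogeneous hp]
  congr 2
  ext1 i
  fin_cases i <;> exact mul_comm _ _

end ParamSubst

theorem X_mul_paramSubst_third_column {k : Type*} [CommRing k] {d : ℕ}
    {m₁ m₂ n₁ n₂ : MvPolynomial (Fin 3) k}
    (hm₁ : m₁.IsHomogeneous d) (hm₂ : m₂.IsHomogeneous d)
    (hn₁ : n₁.IsHomogeneous d) (hn₂ : n₂.IsHomogeneous d)
    {a₃ b₅ : MvPolynomial (Fin 2) k}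
    (ha : a₃ = X 0 * sub3 k m₂ - X 1 * sub3 k m₁)
    (hb : b₅ = X 0 ^ 3 * sub3 k n₂ - X 1 ^ 3 * sub3 k n₁) :
    X 0 * paramSubst a₃ b₅ (X 0 * rho k n₂ + X 3 * rho k m₂) =
      X 1 * paramSubst a₃ b₅ (X 2 * rho k n₁ + X 3 * rho k m₁) := by
  simp only [map_add, map_mul, paramSubst_X_zero, paramSubst_X_two, paramSubst_X_three,
    paramSubst_rho _ _ hm₁, paramSubst_rho _ _ hm₂, paramSubst_rho _ _ hn₁,
    paramSubst_rho _ _ hn₂]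
  linear_combination b₅ * a₃ ^ d * ha - a₃ ^ (d + 1) * hb

theorem stmt3_general {k : Type*} [CommRing k] {d : ℕ} (m₁ m₂ n₁ n₂ : MvPolynomial (Fin 3) k)
    (hm₁ : m₁.IsHomogeneous d) (hm₂ : m₂.IsHomogeneous d)
    (hn₁ : n₁.IsHomogeneous d) (hn₂ : n₂.IsHomogeneous d)
    (a₃ b₅ : MvPolynomial (Fin 2) k)
    (ha : a₃ = X 0 * sub3 k m₂ - X 1 * sub3 k m₁)
    (hb : b₅ = X 0 ^ 3 * sub3 k n₂ - X 1 ^ 3 * sub3 k n₁) :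
    paramSubst a₃ b₅ (X 0 * X 2 - X 1 ^ 2) = 0 ∧
    paramSubst a₃ b₅ (X 0 * (X 0 * rho k n₂ + X 3 * rho k m₂)
      - X 1 * (X 2 * rho k n₁ + X 3 * rho k m₁)) = 0 ∧
    paramSubst a₃ b₅ (X 1 * (X 0 * rho k n₂ + X 3 * rho k m₂)
      - X 2 * (X 2 * rho k n₁ + X 3 * rho k m₁)) = 0 := by
  have third_column := X_mul_paramSubst_third_column hm₁ hm₂ hn₁ hn₂ ha hb
  refine ⟨?_, ?_, ?_⟩
  · rw [map_sub, map_mul, map_pow, paramSubst_X_zero, paramSubst_X_one, paramSubst_X_two]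
    ring
  · rw [map_sub, map_mul, map_mul _ (X 1), paramSubst_X_zero, paramSubst_X_one]
    linear_combination X 0 * a₃ * third_column
  · rw [map_sub, map_mul, map_mul _ (X 2), paramSubst_X_one, paramSubst_X_two]
    linear_combination X 1 * a₃ * third_column

/-- Under the substitution `x₁ = u₁²a₃, x₂ = u₁u₂a₃, x₃ = u₂²a₃, x₄ = −b₅`,
all three `2×2` minors of the matrix `N` with rows `(x₁, x₂, x₃n₁ + x₄m₁)` and
`(x₂, x₃, x₁n₂ + x₄m₂)` become identically zero in `k[u₁,u₂]`. -/
theorem stmt3 {k : Type*} [CommRing k] (m₁ m₂ n₁ n₂ : MvPolynomial (Fin 3) k)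
    (hm₁ : m₁.IsHomogeneous 1) (hm₂ : m₂.IsHomogeneous 1)
    (hn₁ : n₁.IsHomogeneous 1) (hn₂ : n₂.IsHomogeneous 1)
    (a₃ b₅ : MvPolynomial (Fin 2) k)
    (ha : a₃ = X 0 * sub3 k m₂ - X 1 * sub3 k m₁)
    (hb : b₅ = X 0 ^ 3 * sub3 k n₂ - X 1 ^ 3 * sub3 k n₁) :
    aeval ![X 0 ^ 2 * a₃, X 0 * X 1 * a₃, X 1 ^ 2 * a₃, -b₅]
      (X 0 * X 2 - X 1 ^ 2 : MvPolynomial (Fin 4) k) = 0 ∧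
    aeval ![X 0 ^ 2 * a₃, X 0 * X 1 * a₃, X 1 ^ 2 * a₃, -b₅]
      (X 0 * (X 0 * rho k n₂ + X 3 * rho k m₂)
        - X 1 * (X 2 * rho k n₁ + X 3 * rho k m₁) : MvPolynomial (Fin 4) k) = 0 ∧
    aeval ![X 0 ^ 2 * a₃, X 0 * X 1 * a₃, X 1 ^ 2 * a₃, -b₅]
      (X 1 * (X 0 * rho k n₂ + X 3 * rho k m₂)
        - X 2 * (X 2 * rho k n₁ + X 3 * rho k m₁) : MvPolynomial (Fin 4) k) = 0 := by
  exact stmt3_general m₁ m₂ n₁ n₂ hm₁ hm₂ hn₁ hn₂ a₃ b₅ ha hb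

end
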